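/- Let A be a finite set, N a random subset of A (equivalently, a random vector (c_a)_{a∈A} ∈ {0,1}^A), and let W = (W_a)_{a∈A} be a nonnegative random vector with {W_a > 0} ⊆ {c_a = 1} and E(Σ_a W_a) = 1. Let N_W = #{a : W_a > 0} and Ñ = #{a : c_a = 1}, and define T_W(q) = −log E(Σ_a W_a^q) and T̃(q) = −(q−1) log E(Ñ). If E(Ñ) ≥ 1 then T_W'(1⁻) ≤ T̃'(1) = log E(Ñ); that is, −E(Σ_a W_a log W_a) ≤ log E(Ñ). -/

import Mathlib

open MeasureTheory

/-! The graph of the concave function `x ↦ -x log x` lies below its tangent line at `1 / t`, which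
is `x ↦ (log t - 1) x + 1 / t`. Summed over the points of the random set and integrated, with
`t = E(Ñ)`, the right-hand side becomes `(log E(Ñ) - 1) + 1 = log E(Ñ)`, so neither the moment
function `T_W` nor its concavity is needed. -/

theorem negMulLog_le_tangent {t x : ℝ} (ht : 0 < t) (hx : 0 ≤ x) :
    Real.negMulLog x ≤ (Real.log t - 1) * x + t⁻¹ := by
  have hkl : 0 ≤ t⁻¹ * InformationTheory.klFun (t * x) :=
    mul_nonneg (inv_nonneg.2 ht.le) (InformationTheory.klFun_nonneg (mul_nonneg ht.le hx))
  have hkl_eq : t⁻¹ * InformationTheory.klFun (t * x) =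
      (Real.log t - 1) * x + t⁻¹ - Real.negMulLog x := by
    have hmul := Real.negMulLog_mul t x
    simp only [Real.negMulLog, InformationTheory.klFun] at hmul ⊢
    field_simp
    linarith
  linarith

section

variable {A : Type*} {f : A → ℝ} {s : Finset A}

theorem tsum_negMulLog_le (hf : 0 ≤ f) (hfs : Function.support f ⊆ s) {t : ℝ} (ht : 0 < t) :
    ∑' a, Real.negMulLog (f a) ≤ (Real.log t - 1) * ∑' a, f a + t⁻¹ * s.card := by
  have hlog : Function.support (fun a => Real.negMulLog (f a)) ⊆ s :=
    (Function.support_comp_subset Real.negMulLog_zero f).trans hfs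
  rw [tsum_eq_sum' hlog, tsum_eq_sum' hfs]
  calc ∑ a ∈ s, Real.negMulLog (f a)
      ≤ ∑ a ∈ s, ((Real.log t - 1) * f a + t⁻¹) :=
        Finset.sum_le_sum fun a _ => negMulLog_le_tangent ht (hf a)
    _ = (Real.log t - 1) * ∑ a ∈ s, f a + t⁻¹ * s.card := by
        rw [Finset.sum_add_distrib, ← Finset.mul_sum, Finset.sum_const, nsmul_eq_mul, mul_comm t⁻¹]

end

section

variable {Ω A : Type*} [MeasurableSpace Ω] {μ : Measure Ω} {N : Ω → Finset A}

theorem integral_card_pos_of_integral_tsum_ne_zero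
    {E : Type*} [NormedAddCommGroup E] [NormedSpace ℝ E] {W : Ω → A → E}
    (hsub : ∀ᵐ ω ∂μ, Function.support (W ω) ⊆ N ω)
    (hNint : Integrable (fun ω => ((N ω).card : ℝ)) μ)
    (hW : ∫ ω, ∑' a, W ω a ∂μ ≠ 0) :
    0 < ∫ ω, ((N ω).card : ℝ) ∂μ := by
  have hcard_nonneg : 0 ≤ fun ω => ((N ω).card : ℝ) := fun ω => Nat.cast_nonneg _
  refine (integral_nonneg hcard_nonneg).lt_of_ne' fun hzero => hW ?_
  have hcard_zero := (integral_eq_zero_iff_of_nonneg hcard_nonneg hNint).1 hzero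
  refine integral_eq_zero_of_ae ?_
  filter_upwards [hsub, hcard_zero] with ω hω hcard
  have hempty : N ω = ∅ := Finset.card_eq_zero.1 (Nat.cast_eq_zero.1 hcard)
  rw [tsum_eq_sum' hω, hempty, Finset.sum_empty, Pi.zero_apply]

theorem stmt17_general {W : Ω → A → ℝ}
    (hnonneg : ∀ᵐ ω ∂μ, 0 ≤ W ω)
    (hsub : ∀ᵐ ω ∂μ, Function.support (W ω) ⊆ N ω)
    (hmean : ∫ ω, ∑' a, W ω a ∂μ = 1)
    (hNint : Integrable (fun ω => ((N ω).card : ℝ)) μ)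
    (hWlogint : Integrable (fun ω => ∑' a, W ω a * Real.log (W ω a)) μ) :
    -∫ ω, ∑' a, W ω a * Real.log (W ω a) ∂μ ≤ Real.log (∫ ω, ((N ω).card : ℝ) ∂μ) := by
  set M := ∫ ω, ((N ω).card : ℝ) ∂μ with hM
  have hMpos : 0 < M :=
    integral_card_pos_of_integral_tsum_ne_zero hsub hNint (hmean ▸ one_ne_zero)
  have hWint : Integrable (fun ω => ∑' a, W ω a) μ :=
    .of_integral_ne_zero (hmean ▸ one_ne_zero)
  have hpointwise : ∀ᵐ ω ∂μ, -∑' a, W ω a * Real.log (W ω a) ≤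
      (Real.log M - 1) * ∑' a, W ω a + M⁻¹ * (N ω).card := by
    filter_upwards [hnonneg, hsub] with ω hω hωN
    simpa only [Real.negMulLog, neg_mul, tsum_neg] using tsum_negMulLog_le hω hωN hMpos
  calc -∫ ω, ∑' a, W ω a * Real.log (W ω a) ∂μ
      = ∫ ω, -∑' a, W ω a * Real.log (W ω a) ∂μ := (integral_neg _).symm
    _ ≤ ∫ ω, ((Real.log M - 1) * ∑' a, W ω a + M⁻¹ * (N ω).card) ∂μ :=
        integral_mono_ae hWlogint.neg ((hWint.const_mul _).add (hNint.const_mul _)) hpointwise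
    _ = (Real.log M - 1) * 1 + M⁻¹ * M := by
        rw [integral_add (hWint.const_mul _) (hNint.const_mul _), integral_const_mul,
          integral_const_mul, hmean, ← hM]
    _ = Real.log M := by rw [inv_mul_cancel₀ hMpos.ne']; ring

end

/-- If `{W_a > 0} ⊆ {c_a = 1}`, `E(Σ_a W_a) = 1` and `E(Ñ) ≥ 1`, where
`Ñ = #{a : c_a = 1}`, then `−E(Σ_a W_a log W_a) ≤ log E(Ñ)`. -/
theorem stmt17 {Ω A : Type*} [MeasurableSpace Ω] (μ : Measure Ω)
    [IsProbabilityMeasure μ] [Fintype A] [DecidableEq A]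
    (W : Ω → A → ℝ) (c : Ω → A → Bool)
    (hnonneg : ∀ ω a, 0 ≤ W ω a)
    (hsub : ∀ ω a, 0 < W ω a → c ω a = true)
    (hmean : ∫ ω, ∑ a, W ω a ∂μ = 1)
    (hNint : Integrable
      (fun ω => ((Finset.univ.filter fun a => c ω a = true).card : ℝ)) μ)
    (hWlogint : Integrable (fun ω => ∑ a, W ω a * Real.log (W ω a)) μ)
    (hEN : 1 ≤ ∫ ω, ((Finset.univ.filter fun a => c ω a = true).card : ℝ) ∂μ) :
    -∫ ω, ∑ a, W ω a * Real.log (W ω a) ∂μ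
      ≤ Real.log (∫ ω, ((Finset.univ.filter fun a => c ω a = true).card : ℝ) ∂μ) := by
  simp only [← tsum_fintype (L := .unconditional A)] at hmean hWlogint ⊢
  exact stmt17_general (.of_forall hnonneg) (.of_forall fun ω a ha =>
    by simpa using hsub ω a ((hnonneg ω a).lt_of_ne' ha)) hmean hNint hWlogint
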